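/- arXiv:2602.14537 — 2 statements merged into one kernel-verified Lean document; each statement's English description precedes it below -/
import Mathlib

section
/- (Two-layer affine recursion with rank-deficient coefficient.) Let 𝒳 ⊆ ℝ^n be open and convex, 𝒰 ⊆ ℝ^m be open, and write x = col(x₁, x₂) with x₁ ∈ ℝ^{n₁}, x₂ ∈ ℝ^{n−n₁}. Let Φ = col(Φ₁, Φ₂) : 𝒳 → ℝ^n and B = col(B₁, 0) ∈ ℝ^{n×m}, where B₁ ∈ ℝ^{n₁×m} has full row rank. Suppose (A1) Φ(x) + Bu ∈ 𝒳 for all x ∈ 𝒳, u ∈ 𝒰, and the map (x,u) ↦ Φ(x) + Bu from 𝒳 × 𝒰 to 𝒳 is surjective; and (A2) there exist a function Φ̃ : 𝒳 → ℝ^n and a matrix B̃ ∈ ℝ^{n×m} such that Φ(Φ(x) + Bu) = Φ̃(x) + B̃u for all x ∈ 𝒳 and u ∈ 𝒰. Then there exist constant matrices C₁ ∈ ℝ^{n₁×n₁} and C₂ ∈ ℝ^{(n−n₁)×n₁}, and functions g₁ : proj_{x₂}(𝒳) → ℝ^{n₁} and g₂ : proj_{x₂}(𝒳) → ℝ^{n−n₁},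 such that Φ₁(x₁, x₂) = C₁x₁ + g₁(x₂) and Φ₂(x₁, x₂) = C₂x₁ + g₂(x₂) for all col(x₁, x₂) ∈ 𝒳. -/
open Matrix

noncomputable section

/-- A real matrix whose rank equals its number of rows has a right inverse. -/
theorem exists_mul_eq_one_of_rank_eq {k m : ℕ} (B : Matrix (Fin k) (Fin m) ℝ)
    (hB : B.rank = k) : ∃ R : Matrix (Fin m) (Fin k) ℝ, B * R = 1 := by
  rw [← Matrix.mulVec_surjective_iff_exists_right_inverse]
  have htop : LinearMap.range B.mulVecLin = ⊤ := by
    apply Submodule.eq_top_of_finrank_eq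
    rw [← Matrix.rank, hB, Module.finrank_fin_fun]
  exact LinearMap.range_eq_top.mp htop

/-- A function that is locally affine with a fixed linear part along the first block of
coordinates is affine along that block on every slice of a convex set. -/
theorem sub_mulVec_eq_of_eventually_eq {ι κ τ : Type*} [Fintype ι]
    {X : Set (ι ⊕ κ → ℝ)} (hX : Convex ℝ X) (Ψ : (ι ⊕ κ → ℝ) → τ → ℝ) (C : Matrix τ ι ℝ)
    (hloc : ∀ y ∈ X, ∀ᶠ d in nhds (0 : ι → ℝ),
      Ψ (Sum.elim (y ∘ Sum.inl + d) (y ∘ Sum.inr)) = Ψ y + C.mulVec d)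
    {x y : ι ⊕ κ → ℝ} (hx : x ∈ X) (hy : y ∈ X) (hxy : x ∘ Sum.inr = y ∘ Sum.inr) :
    Ψ x - C.mulVec (x ∘ Sum.inl) = Ψ y - C.mulVec (y ∘ Sum.inl) := by
  set c := y ∘ Sum.inr with hc
  have hS : Convex ℝ {a : ι → ℝ | Sum.elim a c ∈ X} := by
    intro a ha b hb s t hs ht hst
    have h := hX ha hb hs ht hst
    have he : s • Sum.elim a c + t • Sum.elim b c = Sum.elim (s • a + t • b) c := by
      ext i
      rcases i with i | i
      · simp
      · simp [← add_mul, hst]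
    rwa [he] at h
  have hxe : Sum.elim (x ∘ Sum.inl) c = x := by rw [← hxy, Sum.elim_comp_inl_inr]
  have hye : Sum.elim (y ∘ Sum.inl) c = y := by rw [hc, Sum.elim_comp_inl_inr]
  have key := hS.isPreconnected.induction₂
    (fun a b => Ψ (Sum.elim a c) - C.mulVec a = Ψ (Sum.elim b c) - C.mulVec b)
    (fun a ha => by
      have hd : Filter.Tendsto (fun b => b - a) (nhds a) (nhds 0) := by
        have : Continuous fun b : ι → ℝ => b - a := by fun_prop
        simpa using this.tendsto a
      filter_upwards [(hd.eventually (hloc _ ha)).filter_mono nhdsWithin_le_nhds] with b hb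
      simp only [Sum.elim_comp_inl, Sum.elim_comp_inr, add_sub_cancel] at hb
      rw [hb, Matrix.mulVec_sub]
      abel)
    (fun _ _ _ _ _ _ h₁ h₂ => h₁.trans h₂) (fun _ _ _ _ h => h.symm)
    (x := x ∘ Sum.inl) (y := y ∘ Sum.inl) (by simpa [hxe] using hx) (by simpa [hye] using hy)
  simpa only [hxe, hye] using key

/-- **Two-layer affine recursion with rank-deficient coefficient.**
The state is written `x = col(x₁, x₂)` (indexed by `Fin n₁ ⊕ Fin n₂`), the dynamics are
`Φ(x) + Bu` with `Φ = col(Φ₁, Φ₂)` and `B = col(B₁, 0)` where `B₁` has full row rank.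
If (A1) the dynamics map `𝒳 × 𝒰` into `𝒳` and are surjective onto `𝒳`, and
(A2) the two-layer composition `Φ(Φ(x) + Bu)` equals `Φ̃(x) + B̃u` on `𝒳 × 𝒰`, then both
`Φ₁` and `Φ₂` are affine in `x₁`: `Φ₁(x₁,x₂) = C₁x₁ + g₁(x₂)` and
`Φ₂(x₁,x₂) = C₂x₁ + g₂(x₂)` on `𝒳`. -/
theorem two_layer_affine_recursion_rank_deficient
    {n₁ n₂ m : ℕ} (X : Set ((Fin n₁ ⊕ Fin n₂) → ℝ)) (U : Set (Fin m → ℝ))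
    (hXopen : IsOpen X) (hXconv : Convex ℝ X) (hUopen : IsOpen U)
    (Φ₁ : ((Fin n₁ ⊕ Fin n₂) → ℝ) → Fin n₁ → ℝ)
    (Φ₂ : ((Fin n₁ ⊕ Fin n₂) → ℝ) → Fin n₂ → ℝ)
    (B₁ : Matrix (Fin n₁) (Fin m) ℝ) (hB₁ : B₁.rank = n₁)
    (hmem : ∀ x ∈ X, ∀ u ∈ U, Sum.elim (Φ₁ x + B₁.mulVec u) (Φ₂ x) ∈ X)
    (hsurj : ∀ y ∈ X, ∃ x ∈ X, ∃ u ∈ U, Sum.elim (Φ₁ x + B₁.mulVec u) (Φ₂ x) = y)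
    (Φt : ((Fin n₁ ⊕ Fin n₂) → ℝ) → ((Fin n₁ ⊕ Fin n₂) → ℝ))
    (Bt : Matrix (Fin n₁ ⊕ Fin n₂) (Fin m) ℝ)
    (hrec : ∀ x ∈ X, ∀ u ∈ U,
      Sum.elim (Φ₁ (Sum.elim (Φ₁ x + B₁.mulVec u) (Φ₂ x)))
               (Φ₂ (Sum.elim (Φ₁ x + B₁.mulVec u) (Φ₂ x)))
        = Φt x + Bt.mulVec u) :
    ∃ (C₁ : Matrix (Fin n₁) (Fin n₁) ℝ) (C₂ : Matrix (Fin n₂) (Fin n₁) ℝ)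
      (g₁ : (Fin n₂ → ℝ) → Fin n₁ → ℝ) (g₂ : (Fin n₂ → ℝ) → Fin n₂ → ℝ),
      ∀ x ∈ X,
        Φ₁ x = C₁.mulVec (x ∘ Sum.inl) + g₁ (x ∘ Sum.inr) ∧
        Φ₂ x = C₂.mulVec (x ∘ Sum.inl) + g₂ (x ∘ Sum.inr) := by
  obtain ⟨R, hR⟩ := exists_mul_eq_one_of_rank_eq B₁ hB₁
  set C := Bt * R
  set Ψ : ((Fin n₁ ⊕ Fin n₂) → ℝ) → ((Fin n₁ ⊕ Fin n₂) → ℝ) :=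
    fun x => Sum.elim (Φ₁ x) (Φ₂ x) with hΨ
  have hloc : ∀ y ∈ X, ∀ᶠ d in nhds (0 : Fin n₁ → ℝ),
      Ψ (Sum.elim (y ∘ Sum.inl + d) (y ∘ Sum.inr)) = Ψ y + C.mulVec d := by
    intro y hy
    obtain ⟨x, hx, u, hu, rfl⟩ := hsurj y hy
    have hcont : Continuous fun d : Fin n₁ → ℝ => u + R.mulVec d := by fun_prop
    have hU : ∀ᶠ d in nhds (0 : Fin n₁ → ℝ), u + R.mulVec d ∈ U :=
      hcont.continuousAt.eventually_mem (hUopen.mem_nhds (by simpa using hu))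
    filter_upwards [hU] with d hd
    have h := hrec x hx _ hd
    rw [Matrix.mulVec_add, Matrix.mulVec_mulVec, hR, Matrix.one_mulVec, ← add_assoc,
      Matrix.mulVec_add, Matrix.mulVec_mulVec, ← add_assoc, ← hrec x hx u hu] at h
    simpa only [hΨ, Sum.elim_comp_inl, Sum.elim_comp_inr] using h
  let g : (Fin n₂ → ℝ) → (Fin n₁ ⊕ Fin n₂) → ℝ := fun c =>
    open Classical in
    if h : ∃ y ∈ X, y ∘ Sum.inr = c then Ψ h.choose - C.mulVec (h.choose ∘ Sum.inl) else 0
  have hg : ∀ x ∈ X, Ψ x = C.mulVec (x ∘ Sum.inl) + g (x ∘ Sum.inr) := by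
    intro x hx
    have h : ∃ y ∈ X, y ∘ Sum.inr = x ∘ Sum.inr := ⟨x, hx, rfl⟩
    have hgx : g (x ∘ Sum.inr) = Ψ h.choose - C.mulVec (h.choose ∘ Sum.inl) := dif_pos h
    rw [hgx, sub_mulVec_eq_of_eventually_eq hXconv Ψ C hloc h.choose_spec.1 hx h.choose_spec.2]
    abel
  refine ⟨C.submatrix Sum.inl id, C.submatrix Sum.inr id, fun c => g c ∘ Sum.inl,
    fun c => g c ∘ Sum.inr, fun x hx => ⟨?_, ?_⟩⟩
  · exact congrArg (· ∘ Sum.inl) (hg x hx)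
  · exact congrArg (· ∘ Sum.inr) (hg x hx)
end
end

section
/- (Rank-based characterization for (k+1)-step linear predictors, statement 1.) Consider the chain-structured system with nonlinearity concentrated in x_k (as defined in the context), where additionally 𝒳 is open and convex, 𝒰 is open, and the dynamics map from 𝒳 × 𝒰 onto 𝒳 is surjective. Suppose the system admits a (k+1)-step linear predictor. If the coefficient matrix M_k is the zero matrix or has full row rank, then the system admits a control-affine preserved (CAP) structure. -/
open Matrix

noncomputable section

/-- Index type for a block-partitioned state. -/
abbrev Blk {K : ℕ} (dims : Fin K → ℕ) : Type := (i : Fin K) × Fin (dims i)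

/-- The `i`-th block of a block-partitioned state. -/
def blk {K : ℕ} {dims : Fin K → ℕ} (x : Blk dims → ℝ) (i : Fin K) : Fin (dims i) → ℝ :=
  fun j => x ⟨i, j⟩

/-- The `N`-step iterated dynamics `f_N`. -/
def iterDyn {ι : Type} {m : ℕ} (f : (ι → ℝ) → (Fin m → ℝ) → (ι → ℝ)) :
    (N : ℕ) → (ι → ℝ) → (Fin N → (Fin m → ℝ)) → (ι → ℝ)
  | 0, x, _ => x
  | N + 1, x, u => f (iterDyn f N x (fun i => u i.castSucc)) (u (Fin.last N))

/-- The system `x⁺ = f(x,u)` admits an `N`-step linear predictor on `X`, `U`. -/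
def HasNStepLinearPredictor {ι : Type} [Fintype ι] {m : ℕ}
    (f : (ι → ℝ) → (Fin m → ℝ) → (ι → ℝ))
    (X : Set (ι → ℝ)) (U : Set (Fin m → ℝ)) (N : ℕ) : Prop :=
  ∃ (Φ : (ι → ℝ) → (ι → ℝ)) (B : Matrix ι (Fin N × Fin m) ℝ),
    ∀ x ∈ X, ∀ u : Fin N → (Fin m → ℝ), (∀ i, u i ∈ U) →
      iterDyn f N x u = Φ x + B.mulVec (fun p => u p.1 p.2)

/-- The system admits a control-affine preserved (CAP) structure. -/
def HasCAP {ι : Type} [Fintype ι] [DecidableEq ι] {m : ℕ}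
    (f : (ι → ℝ) → (Fin m → ℝ) → (ι → ℝ))
    (X : Set (ι → ℝ)) (U : Set (Fin m → ℝ)) : Prop :=
  ∃ (n₁ n₂ : ℕ) (T : Matrix (Fin n₁ ⊕ Fin n₂) ι ℝ) (S : Matrix ι (Fin n₁ ⊕ Fin n₂) ℝ),
    T * S = 1 ∧ S * T = 1 ∧
    ∃ (g : (Fin n₂ → ℝ) → (Fin n₁ → ℝ)) (h : (Fin n₂ → ℝ) → (Fin n₂ → ℝ))
      (C : Matrix (Fin n₁) (Fin n₁) ℝ) (D : Matrix (Fin n₁) (Fin m) ℝ),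
      ∀ x ∈ X, ∀ u ∈ U,
        T.mulVec (f x u) =
          Sum.elim
            (g (fun i => T.mulVec x (Sum.inr i)) +
              C.mulVec (fun i => T.mulVec x (Sum.inl i)) + D.mulVec u)
            (h (fun i => T.mulVec x (Sum.inr i)))

/-- The chain-structured system with nonlinearity concentrated in the last block. -/
def IsChainSystem {k m : ℕ} (dims : Fin (k + 1) → ℕ)
    (f : (Blk dims → ℝ) → (Fin m → ℝ) → (Blk dims → ℝ))
    (X : Set (Blk dims → ℝ)) (U : Set (Fin m → ℝ))
    (M₀ : Matrix (Fin (dims 0)) (Fin m) ℝ)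
    (M : (i : Fin k) → Matrix (Fin (dims i.succ)) (Fin (dims i.castSucc)) ℝ)
    (C : (i : Fin (k + 1)) → Matrix (Fin (dims i)) (Blk dims) ℝ)
    (g : (i : Fin (k + 1)) → (Fin (dims (Fin.last k)) → ℝ) → Fin (dims i) → ℝ) : Prop :=
  (∀ i : Fin (k + 1), ∀ q : Blk dims,
      ¬((i : ℕ) ≤ (q.1 : ℕ) ∧ (q.1 : ℕ) < k) → ∀ j, C i j q = 0) ∧
  M₀.rank = dims 0 ∧
  (∀ i : Fin k, (i : ℕ) < k - 1 → (M i).rank = dims i.succ) ∧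
  (∀ x ∈ X, ∀ u ∈ U,
    blk (f x u) 0 = M₀.mulVec u + (C 0).mulVec x + g 0 (blk x (Fin.last k)) ∧
    ∀ i : Fin k,
      blk (f x u) i.succ =
        (M i).mulVec (blk x i.castSucc) + (C i.succ).mulVec x +
          g i.succ (blk x (Fin.last k)))

/-- A coordinate splitting in which the coordinates satisfying `p` evolve autonomously, and all
other coordinates are affine up to a function of the former, is a CAP structure. -/
theorem hasCAP_of_coordinate_split {ι : Type} [Fintype ι] [DecidableEq ι] {m : ℕ}
    {f : (ι → ℝ) → (Fin m → ℝ) → (ι → ℝ)} {X : Set (ι → ℝ)} {U : Set (Fin m → ℝ)}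
    (p : ι → Prop) [DecidablePred p] (L : Matrix ι ι ℝ) (E : Matrix ι (Fin m) ℝ)
    (G : ({i // p i} → ℝ) → ι → ℝ)
    (hLrow : ∀ i, p i → ∀ q, L i q = 0) (hLcol : ∀ i q, p q → L i q = 0)
    (hE : ∀ i, p i → ∀ q, E i q = 0)
    (hfeq : ∀ x ∈ X, ∀ u ∈ U, f x u = L *ᵥ x + E *ᵥ u + G (fun i => x i)) :
    HasCAP f X U := by
  let a := Fintype.equivFin {i // ¬ p i}
  let b := Fintype.equivFin {i // p i}
  let e : Fin (Fintype.card {i // ¬ p i}) ⊕ Fin (Fintype.card {i // p i}) ≃ ι :=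
    (Equiv.sumCongr a.symm b.symm).trans ((Equiv.sumComm _ _).trans (Equiv.sumCompl p))
  have hinr : ∀ j, e (Sum.inr j) = (b.symm j : ι) := fun j => rfl
  have hT : ∀ v : ι → ℝ, ((1 : Matrix ι ι ℝ).submatrix e id) *ᵥ v = fun s => v (e s) := by
    intro v
    funext s
    simp [Matrix.mulVec, dotProduct, Matrix.one_apply]
  refine ⟨_, _, (1 : Matrix ι ι ℝ).submatrix e id, (1 : Matrix ι ι ℝ).submatrix id e, ?_, ?_,
    fun y j => G (fun i => y (b i)) (e (Sum.inl j)),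
    fun y j => G (fun i => y (b i)) (e (Sum.inr j)),
    fun i j => L (e (Sum.inl i)) (e (Sum.inl j)), fun i j => E (e (Sum.inl i)) j, ?_⟩
  · rw [← Matrix.submatrix_mul _ _ _ _ _ Function.bijective_id]
    simp
  · rw [Matrix.submatrix_mul_equiv]
    simp
  intro x hx u hu
  rw [hT, hT, hfeq x hx u hu]
  have hrestrict : (fun i : {i // p i} => x (e (Sum.inr (b i)))) =
      fun i : {i // p i} => x i := by
    funext i
    simp [hinr]
  funext s
  rcases s with j | j
  · have hsum : (L *ᵥ x) (e (Sum.inl j)) =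
        ∑ i, L (e (Sum.inl j)) (e (Sum.inl i)) * x (e (Sum.inl i)) := by
      rw [Matrix.mulVec, dotProduct, ← e.sum_comp, Fintype.sum_sum_type]
      simp [hinr, hLcol _ _ (b.symm _).2]
    simp only [Sum.elim_inl, Pi.add_apply, hrestrict, hsum]
    simp only [Matrix.mulVec, dotProduct]
    ring
  · have hp : p (e (Sum.inr j)) := (b.symm j).2
    simp [hrestrict, Matrix.mulVec, dotProduct, hLrow _ hp, hE _ hp]

theorem hasCAP_of_affine {ι : Type} [Fintype ι] [DecidableEq ι] {m : ℕ}
    {f : (ι → ℝ) → (Fin m → ℝ) → (ι → ℝ)} {X : Set (ι → ℝ)} {U : Set (Fin m → ℝ)}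
    (L : (ι → ℝ) →ₗ[ℝ] (ι → ℝ)) (E : (Fin m → ℝ) →ₗ[ℝ] (ι → ℝ)) (c : ι → ℝ)
    (hfeq : ∀ x ∈ X, ∀ u ∈ U, f x u = L x + E u + c) : HasCAP f X U :=
  hasCAP_of_coordinate_split (fun _ => False) (LinearMap.toMatrix' L) (LinearMap.toMatrix' E)
    (fun _ => c) (fun _ h => h.elim) (fun _ _ h => h.elim) (fun _ h => h.elim) <| by
      simpa only [LinearMap.toMatrix'_mulVec] using hfeq

section Trajectory

variable {ι : Type} {m : ℕ} {f : (ι → ℝ) → (Fin m → ℝ) → (ι → ℝ)}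
  {X : Set (ι → ℝ)} {U : Set (Fin m → ℝ)}

theorem iterDyn_succ_seq (N : ℕ) (x : ι → ℝ) (u : ℕ → Fin m → ℝ) :
    iterDyn f (N + 1) x (fun i => u i) = f (iterDyn f N x (fun i => u i)) (u N) := by
  simp [iterDyn]

theorem iterDyn_mem (hf : ∀ x ∈ X, ∀ u ∈ U, f x u ∈ X) (N : ℕ) {x : ι → ℝ} (hx : x ∈ X)
    {u : ℕ → Fin m → ℝ} (hu : ∀ n, u n ∈ U) : iterDyn f N x (fun i => u i) ∈ X := by
  induction N with
  | zero => exact hx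
  | succ N ih =>
    rw [iterDyn_succ_seq]
    exact hf _ ih _ (hu N)

theorem exists_iterDyn_eq (hsurj : ∀ y ∈ X, ∃ x ∈ X, ∃ u ∈ U, f x u = y) (N : ℕ) :
    ∀ y ∈ X, ∃ x ∈ X, ∃ u : ℕ → Fin m → ℝ,
      (∀ n, u n ∈ U) ∧ iterDyn f N x (fun i => u i) = y := by
  induction N with
  | zero =>
    intro y hy
    obtain ⟨_, _, v, hv, _⟩ := hsurj y hy
    exact ⟨y, hy, fun _ => v, fun _ => hv, rfl⟩
  | succ N ih =>
    intro y hy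
    obtain ⟨z, hz, v, hv, rfl⟩ := hsurj y hy
    obtain ⟨x, hx, u, hu, rfl⟩ := ih z hz
    refine ⟨x, hx, Function.update u N v, fun n => ?_, ?_⟩
    · by_cases h : n = N
      · simpa [h] using hv
      · simpa [Function.update_of_ne h] using hu n
    · rw [iterDyn_succ_seq, Function.update_self]
      congr 2
      funext i
      rw [Function.update_of_ne i.2.ne]

/-- Changing only the first input shifts the trajectory linearly as long as the change has not
reached the nonlinearity. -/
theorem iterDyn_update_zero_sub {κ : Type}
    (hf : ∀ x ∈ X, ∀ u ∈ U, f x u ∈ X)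
    {A : (ι → ℝ) →ₗ[ℝ] (ι → ℝ)} {E : (Fin m → ℝ) →ₗ[ℝ] (ι → ℝ)}
    {P : (ι → ℝ) →ₗ[ℝ] (κ → ℝ)} {g : (κ → ℝ) → ι → ℝ}
    (hfeq : ∀ x ∈ X, ∀ u ∈ U, f x u = A x + E u + g (P x))
    {N : ℕ} (hzero : ∀ j < N, ∀ v, P ((A ^ j) (E v)) = 0)
    {x : ι → ℝ} (hx : x ∈ X) {u : ℕ → Fin m → ℝ} (hu : ∀ n, u n ∈ U)
    {v : Fin m → ℝ} (hv : v ∈ U) (j : ℕ) (hj : j ≤ N) :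
    iterDyn f (j + 1) x (fun i => Function.update u 0 v i) - iterDyn f (j + 1) x (fun i => u i) =
      (A ^ j) (E (v - u 0)) := by
  have hu' : ∀ n, Function.update u 0 v n ∈ U := by
    intro n
    by_cases h : n = 0
    · simpa [h] using hv
    · simpa [Function.update_of_ne h] using hu n
  induction j with
  | zero =>
    change f x (Function.update u 0 v 0) - f x (u 0) = _
    rw [hfeq _ hx _ (hu' 0), hfeq _ hx _ (hu 0)]
    simp
  | succ j ih =>
    have ih := ih (by omega)
    have hP := hzero j (by omega) (v - u 0)
    rw [← ih, map_sub, sub_eq_zero] at hP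
    rw [iterDyn_succ_seq, iterDyn_succ_seq _ x u,
      hfeq _ (iterDyn_mem hf _ hx hu') _ (hu' _), hfeq _ (iterDyn_mem hf _ hx hu) _ (hu _), hP,
      Function.update_of_ne (Nat.succ_ne_zero j), pow_succ', Module.End.mul_apply, ← ih, map_sub]
    abel

end Trajectory

/-- If the first input reaches the nonlinearity, through a surjective map, exactly one step before
the prediction horizon, then a linear predictor forces the dynamics to be affine. -/
theorem hasCAP_of_surjective_markov {ι κ : Type} [Fintype ι] [DecidableEq ι] [Fintype κ] {m : ℕ}
    {f : (ι → ℝ) → (Fin m → ℝ) → (ι → ℝ)} {X : Set (ι → ℝ)} {U : Set (Fin m → ℝ)}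
    (hXopen : IsOpen X) (hXconv : Convex ℝ X) (hUopen : IsOpen U)
    (hf : ∀ x ∈ X, ∀ u ∈ U, f x u ∈ X)
    (hsurj : ∀ y ∈ X, ∃ x ∈ X, ∃ u ∈ U, f x u = y)
    {A : (ι → ℝ) →ₗ[ℝ] (ι → ℝ)} {E : (Fin m → ℝ) →ₗ[ℝ] (ι → ℝ)}
    {P : (ι → ℝ) →ₗ[ℝ] (κ → ℝ)} {g : (κ → ℝ) → ι → ℝ}
    (hfeq : ∀ x ∈ X, ∀ u ∈ U, f x u = A x + E u + g (P x))
    {N : ℕ} (hzero : ∀ j < N, ∀ v, P ((A ^ j) (E v)) = 0)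
    (honto : Function.Surjective (P ∘ₗ (A ^ N) ∘ₗ E))
    (hpred : HasNStepLinearPredictor f X U (N + 2)) : HasCAP f X U := by
  obtain ⟨Φ, B, hB⟩ := hpred
  obtain ⟨Q, hQ⟩ := (P ∘ₗ (A ^ N) ∘ₗ E).exists_rightInverse_of_surjective
    (LinearMap.range_eq_top.2 honto)
  have hQ : ∀ w, P ((A ^ N) (E (Q w))) = w := fun w => LinearMap.congr_fun hQ w
  let B₀ : (Fin m → ℝ) →ₗ[ℝ] (ι → ℝ) :=
    Matrix.mulVecLin (Matrix.of fun i j => B i (0, j))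
  let G : (κ → ℝ) →ₗ[ℝ] (ι → ℝ) := (B₀ - (A ^ (N + 1)) ∘ₗ E) ∘ₗ Q
  let F : (ι → ℝ) → ι → ℝ := fun y => g (P y) - G (P y)
  have hlocal : ∀ y ∈ X, ∀ᶠ z in nhds y, F z = F y := by
    intro y hy
    obtain ⟨x, hx, u, hu, hxy⟩ := exists_iterDyn_eq hsurj (N + 1) y hy
    let V : (ι → ℝ) → Fin m → ℝ := fun z => u 0 + Q (P (z - y))
    have hVcont : Continuous V :=
      continuous_const.add ((Q ∘ₗ P).continuous_of_finiteDimensional.comp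
        (continuous_id.sub continuous_const))
    have hVy : V y ∈ U := by simpa [V] using hu 0
    filter_upwards [hVcont.continuousAt (hUopen.mem_nhds hVy)] with z hz
    have hz : V z ∈ U := hz
    have hu' : ∀ n, Function.update u 0 (V z) n ∈ U := by
      intro n
      by_cases h : n = 0
      · simpa [h] using hz
      · simpa [Function.update_of_ne h] using hu n
    have hshift := iterDyn_update_zero_sub hf hfeq hzero hx hu hz N le_rfl
    have hVsub : V z - u 0 = Q (P (z - y)) := by simp [V]
    rw [hxy, hVsub] at hshift
    have hP := congrArg P hshift
    rw [hQ, map_sub, map_sub, sub_left_inj] at hP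
    have hend := congrArg₂ (· - ·) (hB x hx (fun i => Function.update u 0 (V z) i)
      fun i => hu' i) (hB x hx (fun i => u i) fun i => hu i)
    have hBsub : (Φ x + B *ᵥ fun p => Function.update u 0 (V z) p.1 p.2) -
        (Φ x + B *ᵥ fun p => u p.1 p.2) = B₀ (Q (P (z - y))) := by
      rw [add_sub_add_left_eq_sub, ← Matrix.mulVec_sub, ← hVsub]
      funext i
      simp only [B₀, Matrix.mulVecLin_apply, Matrix.mulVec, dotProduct, Fintype.sum_prod_type,
        Fin.sum_univ_succ (n := N + 1)]
      simp
    rw [hBsub, iterDyn_succ_seq (N + 1), iterDyn_succ_seq (N + 1) x u,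
      hfeq _ (iterDyn_mem hf _ hx hu') _ (hu' _), hfeq _ (iterDyn_mem hf _ hx hu) _ (hu _),
      hP, hxy, Function.update_of_ne (Nat.succ_ne_zero N)] at hend
    have hA := congrArg A hshift
    rw [← Module.End.mul_apply, ← pow_succ', map_sub] at hA
    have hG : G (P z) - G (P y) = B₀ (Q (P (z - y))) - (A ^ (N + 1)) (E (Q (P (z - y)))) := by
      rw [← map_sub, ← map_sub]
      rfl
    have : F z - F y = 0 := by
      have : F z - F y = (g (P z) - g (P y)) - (G (P z) - G (P y)) := by
        simp only [F]
        abel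
      rw [this, hG, ← hA, ← hend]
      abel
    exact sub_eq_zero.1 this
  rcases X.eq_empty_or_nonempty with rfl | ⟨y, hy⟩
  · exact hasCAP_of_affine 0 0 0 (fun x hx => absurd hx (Set.notMem_empty x))
  have hderiv : ∀ z ∈ X, HasFDerivAt F (0 : (ι → ℝ) →L[ℝ] (ι → ℝ)) z := fun z hz =>
    (hasFDerivAt_const (F z) z).congr_of_eventuallyEq (hlocal z hz)
  have hconst : ∀ z ∈ X, F z = F y := fun z hz =>
    hXopen.is_const_of_fderiv_eq_zero hXconv.isPreconnected
      (fun w hw => (hderiv w hw).differentiableAt.differentiableWithinAt)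
      (fun w hw => (hderiv w hw).fderiv) hz hy
  refine hasCAP_of_affine (A + G ∘ₗ P) E (F y) fun x hx u hu => ?_
  rw [hfeq x hx u hu, ← hconst x hx]
  simp only [F, LinearMap.add_apply, LinearMap.comp_apply]
  abel

section Chain

variable {k m : ℕ} {dims : Fin (k + 1) → ℕ}

/-- The linear part of the drift of a chain-structured system. -/
def chainDrift (M : (i : Fin k) → Matrix (Fin (dims i.succ)) (Fin (dims i.castSucc)) ℝ)
    (C : (i : Fin (k + 1)) → Matrix (Fin (dims i)) (Blk dims) ℝ) :
    (Blk dims → ℝ) →ₗ[ℝ] (Blk dims → ℝ) where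
  toFun x := fun p => (C p.1 *ᵥ x) p.2 +
    Fin.cases (motive := fun i => Fin (dims i) → ℝ) 0 (fun i => M i *ᵥ blk x i.castSucc) p.1 p.2
  map_add' x y := by
    funext ⟨i, j⟩
    have hblk : ∀ i, blk (x + y) i = blk x i + blk y i := fun _ => rfl
    cases i using Fin.cases with
    | zero => simp [Matrix.mulVec_add]
    | succ i =>
      simp only [Fin.cases_succ, Pi.add_apply, Matrix.mulVec_add, hblk]
      ring
  map_smul' c x := by
    funext ⟨i, j⟩
    have hblk : ∀ i, blk (c • x) i = c • blk x i := fun _ => rfl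
    cases i using Fin.cases with
    | zero => simp [Matrix.mulVec_smul]
    | succ i => simp [Matrix.mulVec_smul, hblk, mul_add]

/-- The input map of a chain-structured system. -/
def chainInput (M₀ : Matrix (Fin (dims 0)) (Fin m) ℝ) :
    (Fin m → ℝ) →ₗ[ℝ] (Blk dims → ℝ) where
  toFun u := fun p => Fin.cases (motive := fun i => Fin (dims i) → ℝ) (M₀ *ᵥ u)
    (fun _ => 0) p.1 p.2
  map_add' x y := by
    funext ⟨i, j⟩
    cases i using Fin.cases <;> simp [Matrix.mulVec_add]
  map_smul' c x := by
    funext ⟨i, j⟩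
    cases i using Fin.cases <;> simp [Matrix.mulVec_smul]

/-- The projection onto the last block. -/
def lastBlk (dims : Fin (k + 1) → ℕ) : (Blk dims → ℝ) →ₗ[ℝ] (Fin (dims (Fin.last k)) → ℝ) where
  toFun x := blk x (Fin.last k)
  map_add' _ _ := rfl
  map_smul' _ _ := rfl

variable {f : (Blk dims → ℝ) → (Fin m → ℝ) → (Blk dims → ℝ)}
  {X : Set (Blk dims → ℝ)} {U : Set (Fin m → ℝ)}
  {M₀ : Matrix (Fin (dims 0)) (Fin m) ℝ}
  {M : (i : Fin k) → Matrix (Fin (dims i.succ)) (Fin (dims i.castSucc)) ℝ}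
  {C : (i : Fin (k + 1)) → Matrix (Fin (dims i)) (Blk dims) ℝ}
  {g : (i : Fin (k + 1)) → (Fin (dims (Fin.last k)) → ℝ) → Fin (dims i) → ℝ}

theorem blk_chainDrift_succ (x : Blk dims → ℝ) (i : Fin k) :
    blk (chainDrift M C x) i.succ = C i.succ *ᵥ x + M i *ᵥ blk x i.castSucc := rfl

theorem blk_chainInput_succ (u : Fin m → ℝ) (i : Fin k) :
    blk (chainInput (dims := dims) M₀ u) i.succ = 0 := rfl

theorem IsChainSystem.eq_drift_add_input (h : IsChainSystem dims f X U M₀ M C g) :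
    ∀ x ∈ X, ∀ u ∈ U, f x u = chainDrift M C x + chainInput M₀ u +
      fun p => g p.1 (lastBlk dims x) p.2 := by
  intro x hx u hu
  obtain ⟨h0, hs⟩ := h.2.2.2 x hx u hu
  funext ⟨i, j⟩
  cases i using Fin.cases with
  | zero =>
    change _ = ((C 0 *ᵥ x) j + 0) + (M₀ *ᵥ u) j + g 0 (blk x (Fin.last k)) j
    refine (congrFun h0 j).trans ?_
    simp only [Pi.add_apply]
    ring
  | succ i =>
    change _ = ((C i.succ *ᵥ x) j + (M i *ᵥ blk x i.castSucc) j) + 0 + g i.succ (blk x (Fin.last k)) j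
    refine (congrFun (hs i) j).trans ?_
    simp only [Pi.add_apply]
    ring

theorem surjective_mulVec_of_rank_eq {a b : ℕ} {A : Matrix (Fin a) (Fin b) ℝ} (h : A.rank = a) :
    Function.Surjective A.mulVec := by
  have : LinearMap.range A.mulVecLin = ⊤ := by
    apply Submodule.eq_top_of_finrank_eq
    simpa [Matrix.rank] using h
  exact LinearMap.range_eq_top.1 this

/-- Inputs propagate along the chain by one block per step, surjectively. -/
theorem chainDrift_pow_chainInput
    (hC : ∀ i : Fin (k + 1), ∀ q : Blk dims,
      ¬((i : ℕ) ≤ (q.1 : ℕ) ∧ (q.1 : ℕ) < k) → ∀ j, C i j q = 0)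
    (hM₀ : Function.Surjective M₀.mulVec) (hM : ∀ i, Function.Surjective (M i).mulVec)
    (j : Fin (k + 1)) :
    (∀ v, ∀ i, j < i → blk ((chainDrift M C ^ (j : ℕ)) (chainInput M₀ v)) i = 0) ∧
      Function.Surjective fun v => blk ((chainDrift M C ^ (j : ℕ)) (chainInput M₀ v)) j := by
  induction j using Fin.induction with
  | zero =>
    refine ⟨fun v i hi => ?_, hM₀⟩
    cases i using Fin.cases with
    | zero => exact absurd hi (lt_irrefl _)
    | succ i => exact blk_chainInput_succ v i
  | succ j ih =>
    obtain ⟨ihzero, ihsurj⟩ := ih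
    have hCzero : ∀ i : Fin k, j ≤ i → ∀ v,
        C i.succ *ᵥ ((chainDrift M C ^ (j : ℕ)) (chainInput M₀ v)) = 0 := by
      intro i hi v
      funext r
      refine Finset.sum_eq_zero fun q _ => ?_
      by_cases hq : j.castSucc < q.1
      · exact mul_eq_zero_of_right _ (congrFun (ihzero v q.1 hq) q.2)
      · refine mul_eq_zero_of_left (hC _ _ (fun h => hq ?_) _) _
        have := h.1
        simp only [Fin.lt_def, Fin.val_succ, Fin.val_castSucc, Fin.le_def] at *
        omega
    have hstep : ∀ i : Fin k, j ≤ i → ∀ v,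
        blk ((chainDrift M C ^ (j.succ : ℕ)) (chainInput M₀ v)) i.succ =
          M i *ᵥ blk ((chainDrift M C ^ (j : ℕ)) (chainInput M₀ v)) i.castSucc := by
      intro i hi v
      rw [Fin.val_succ, pow_succ', Module.End.mul_apply, blk_chainDrift_succ, hCzero i hi, zero_add]
    refine ⟨fun v i hi => ?_, ?_⟩
    · cases i using Fin.cases with
      | zero => exact absurd hi (Fin.not_lt_zero _)
      | succ i =>
        have hji : j < i := Fin.succ_lt_succ_iff.1 hi
        rw [hstep i hji.le, ← Fin.val_castSucc j, ihzero v _ (Fin.castSucc_lt_castSucc_iff.2 hji),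
          Matrix.mulVec_zero]
    · simp only [hstep j le_rfl]
      exact (hM j).comp ihsurj

end Chain

/-- **Rank-based characterization for `(k+1)`-step linear predictors, statement 1.**
For a chain-structured system with `k+2` Lean-blocks (the paper's `k` equals `k+2`, so the
paper's `(k+1)`-step predictor is a `(k+3)`-step predictor here) on an open convex state set
with open input set and surjective dynamics: if the system admits a `(k+1)`-step linear
predictor (paper count) and the last coefficient matrix `M_k` is zero or has full row rank,
then the system admits a CAP structure. -/
theorem chain_Mk_zero_or_full_row_rank_implies_CAP
    {k m : ℕ} (dims : Fin (k + 2) → ℕ)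
    (f : (Blk dims → ℝ) → (Fin m → ℝ) → (Blk dims → ℝ))
    (X : Set (Blk dims → ℝ)) (U : Set (Fin m → ℝ))
    (hXopen : IsOpen X) (hXconv : Convex ℝ X) (hUopen : IsOpen U)
    (hf : ∀ x ∈ X, ∀ u ∈ U, f x u ∈ X)
    (hsurj : ∀ y ∈ X, ∃ x ∈ X, ∃ u ∈ U, f x u = y)
    (M₀ : Matrix (Fin (dims 0)) (Fin m) ℝ)
    (M : (i : Fin (k + 1)) → Matrix (Fin (dims i.succ)) (Fin (dims i.castSucc)) ℝ)
    (C : (i : Fin (k + 2)) → Matrix (Fin (dims i)) (Blk dims) ℝ)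
    (g : (i : Fin (k + 2)) → (Fin (dims (Fin.last (k + 1))) → ℝ) → Fin (dims i) → ℝ)
    (hchain : IsChainSystem dims f X U M₀ M C g)
    (hpred : HasNStepLinearPredictor f X U (k + 3))
    (hMk : M (Fin.last k) = 0 ∨ (M (Fin.last k)).rank = dims (Fin.last k).succ) :
    HasCAP f X U := by

  rcases hMk with hMk | hMk
  · refine hasCAP_of_coordinate_split (fun p : Blk dims => p.1 = Fin.last (k + 1))
      (LinearMap.toMatrix' (chainDrift M C)) (LinearMap.toMatrix' (chainInput M₀))
      (fun y p => g p.1 (fun j => y ⟨⟨Fin.last (k + 1), j⟩, rfl⟩) p.2) ?_ ?_ ?_ ?_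
    · rintro ⟨i, j⟩ rfl q
      rw [LinearMap.toMatrix'_apply]
      refine (congrFun (blk_chainDrift_succ _ (Fin.last k)) j).trans ?_
      rw [hMk, Matrix.zero_mulVec, add_zero]
      exact Finset.sum_eq_zero fun r _ => mul_eq_zero_of_left
        (hchain.1 (Fin.last k).succ r (by simp) j) _
    · rintro ⟨i, j⟩ ⟨l, q⟩ rfl
      have hblk : ∀ i : Fin (k + 1),
          blk (Pi.single (M := fun _ : Blk dims => ℝ) ⟨Fin.last (k + 1), q⟩ 1) i.castSucc = 0 := by
        intro i
        funext r
        refine Pi.single_eq_of_ne (fun h => ?_) _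
        exact (Fin.castSucc_lt_last i).ne (congrArg Sigma.fst h)
      have hCq : C i j ⟨Fin.last (k + 1), q⟩ = 0 := hchain.1 i _ (by simp) j
      rw [LinearMap.toMatrix'_apply]
      cases i using Fin.cases with
      | zero => simp [chainDrift, hCq]
      | succ i => simp [chainDrift, hCq, hblk]
    · rintro ⟨i, j⟩ rfl q
      rw [LinearMap.toMatrix'_apply]
      exact congrFun (blk_chainInput_succ _ (Fin.last k)) j
    · intro x hx u hu
      rw [LinearMap.toMatrix'_mulVec, LinearMap.toMatrix'_mulVec]
      exact hchain.eq_drift_add_input x hx u hu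
  · have hM : ∀ i, Function.Surjective (M i).mulVec := by
      intro i
      apply surjective_mulVec_of_rank_eq
      cases i using Fin.lastCases with
      | last => exact hMk
      | cast i => exact hchain.2.2.1 _ (by simp)
    have hmarkov := chainDrift_pow_chainInput hchain.1
      (surjective_mulVec_of_rank_eq hchain.2.1) hM
    refine hasCAP_of_surjective_markov hXopen hXconv hUopen hf hsurj (P := lastBlk dims)
      (g := fun y p => g p.1 y p.2) hchain.eq_drift_add_input (N := k + 1) ?_ ?_ hpred
    · intro j hj v
      exact (hmarkov ⟨j, by omega⟩).1 v _ (Fin.lt_def.2 (by simpa using hj))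
    · exact (hmarkov (Fin.last (k + 1))).2
end
end
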